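/- For every Z ∈ L^∞_T, the conditional utility satisfies U_t(Z) = esssup_{(X_s)∈𝓐_{1,t}(Z)} Σ_{s=t}^T E[u_s^{(n)}(X_s) | 𝓕_t], where 𝓐_{1,t}(Z) is the set of families (X_s)_{s=t,…,T} with X_s ∈ L^∞_s and Σ_{s=t}^T X_s = Z a.s.; i.e. the n-fold diversification problem reduces to the one-product problem for the sup-convolutions u_s^{(n)}. -/

import Mathlib

open MeasureTheory Filter

variable {Ω : Type*}

/-- `X ∈ L^∞(m)`: `m`-measurable and (essentially) bounded. -/
def MeasBdd (m : MeasurableSpace Ω) (X : Ω → ℝ) : Prop :=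
  Measurable[m] X ∧ ∃ C : ℝ, ∀ ω, |X ω| ≤ C

/-- `u` is a utility function (strictly increasing, strictly concave, `C¹`) with
derivative `u'` satisfying `u 0 = 0`, `u' 0 = 1`, `u'(+∞) = 0`, `u'(-∞) = +∞`. -/
structure IsUtility (u u' : ℝ → ℝ) : Prop where
  strictMono : StrictMono u
  strictConcave : StrictConcaveOn ℝ Set.univ u
  hasDeriv : ∀ x, HasDerivAt u (u' x) x
  derivCont : Continuous u'
  zero : u 0 = 0
  deriv_zero : u' 0 = 1
  deriv_top : Tendsto u' atTop (nhds 0)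
  deriv_bot : Tendsto u' atBot atTop

/-- A diversification of `Z` at time `t`: an adapted family `(X i s)`,
`i = 1,…,n`, `s = t,…,T`, of essentially bounded random variables summing to `Z`. -/
def IsDiv {m0 : MeasurableSpace Ω} (P : Measure Ω) (ℱ : Filtration ℕ m0)
    (n t T : ℕ) (Z : Ω → ℝ) (X : ℕ → ℕ → Ω → ℝ) : Prop :=
  (∀ i ∈ Finset.Icc 1 n, ∀ s ∈ Finset.Icc t T, MeasBdd (ℱ s) (X i s)) ∧
  ∀ᵐ ω ∂P, (∑ i ∈ Finset.Icc 1 n, ∑ s ∈ Finset.Icc t T, X i s ω) = Z ω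

/-- The total conditional expected utility `∑_{i,s} E[u_{i,s}(X_{i,s}) | 𝓕_t]`. -/
noncomputable def utilSum {m0 : MeasurableSpace Ω} (P : Measure Ω) (ℱ : Filtration ℕ m0)
    (u : ℕ → ℕ → ℝ → ℝ) (n t T : ℕ) (X : ℕ → ℕ → Ω → ℝ) : Ω → ℝ :=
  fun ω => ∑ i ∈ Finset.Icc 1 n, ∑ s ∈ Finset.Icc t T,
    (P[fun ω' => u i s (X i s ω') | ℱ t]) ω

/-- `g` is an essential supremum of the family `S` of random variables under `P`. -/
def IsEssSupOf {m0 : MeasurableSpace Ω} (P : Measure Ω) (S : Set (Ω → ℝ)) (g : Ω → ℝ) : Prop :=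
  (∀ f ∈ S, f ≤ᵐ[P] g) ∧ ∀ h : Ω → ℝ, (∀ f ∈ S, f ≤ᵐ[P] h) → g ≤ᵐ[P] h

/-- A one-product diversification of `Z` at time `t`: an adapted family `(X s)`,
`s = t,…,T`, of essentially bounded random variables summing to `Z`. -/
def IsDiv1 {m0 : MeasurableSpace Ω} (P : Measure Ω) (ℱ : Filtration ℕ m0)
    (t T : ℕ) (Z : Ω → ℝ) (X : ℕ → Ω → ℝ) : Prop :=
  (∀ s ∈ Finset.Icc t T, MeasBdd (ℱ s) (X s)) ∧
  ∀ᵐ ω ∂P, (∑ s ∈ Finset.Icc t T, X s ω) = Z ω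

/-- The sup-convolution `u^{(n)}(x) = sup { Σ_{i=1}^n u_i(x_i) : Σ_{i=1}^n x_i = x }`. -/
noncomputable def supConv (u : ℕ → ℝ → ℝ) (n : ℕ) (x : ℝ) : ℝ :=
  sSup {y | ∃ xs : ℕ → ℝ, (∑ i ∈ Finset.Icc 1 n, xs i) = x ∧
    y = ∑ i ∈ Finset.Icc 1 n, u i (xs i)}

/-!
Grouping a diversification by dates gives `∑ i, u i s (X i s) ≤ u_s^{(n)} (∑ i, X i s)`, which is
one inequality. For the other one an `ε`-optimal split of `X s` suffices, and it can be chosen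
measurably: approximate `X s` from below by a simple function `S` with
`u_s^{(n)} (X s) - ε ≤ u_s^{(n)} (S)`, pick an `ε`-optimal split of each of the finitely many values
of `S`, and hand the remainder `X s - S ≥ 0` to the first product. Such an `S` exists because
`u_s^{(n)}` is finite (as `u i s x ≤ x`) and concave, hence continuous.
-/

section SupConv

variable {u : ℕ → ℝ → ℝ} {n : ℕ}

/-- The total utilities `∑ u_i(x_i)` of the splits `x = x_1 + ⋯ + x_n`. Their supremum is
`supConv u n x`, which is a junk value unless this set is bounded above. -/
def splitValues (u : ℕ → ℝ → ℝ) (n : ℕ) (x : ℝ) : Set ℝ :=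
  {y | ∃ xs : ℕ → ℝ, ∑ i ∈ Finset.Icc 1 n, xs i = x ∧ y = ∑ i ∈ Finset.Icc 1 n, u i (xs i)}

theorem sum_add_single_one (hn : 0 < n) (xs : ℕ → ℝ) (r : ℝ) :
    ∑ i ∈ Finset.Icc 1 n, (xs i + (Pi.single 1 r : ℕ → ℝ) i) =
      ∑ i ∈ Finset.Icc 1 n, xs i + r := by
  rw [Finset.sum_add_distrib, Finset.sum_pi_single', if_pos (Finset.mem_Icc.2 ⟨le_rfl, hn⟩)]

theorem sum_le_sum_add_single_one (hmono : ∀ i ∈ Finset.Icc 1 n, Monotone (u i)) (xs : ℕ → ℝ)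
    {r : ℝ} (hr : 0 ≤ r) :
    ∑ i ∈ Finset.Icc 1 n, u i (xs i) ≤
      ∑ i ∈ Finset.Icc 1 n, u i (xs i + (Pi.single 1 r : ℕ → ℝ) i) := by
  have hsingle : (0 : ℕ → ℝ) ≤ Pi.single 1 r := Pi.single_nonneg.2 hr
  exact Finset.sum_le_sum fun i hi => hmono i hi (le_add_of_nonneg_right (hsingle i))

theorem splitValues_nonempty (u : ℕ → ℝ → ℝ) (hn : 0 < n) (x : ℝ) : (splitValues u n x).Nonempty :=
  ⟨_, _, (sum_add_single_one hn 0 x).trans (by simp), rfl⟩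

theorem bddAbove_splitValues_of_le_affine {a b : ℝ}
    (h : ∀ i ∈ Finset.Icc 1 n, ∀ y, u i y ≤ a * y + b) (x : ℝ) : BddAbove (splitValues u n x) := by
  refine ⟨a * x + n * b, ?_⟩
  rintro _ ⟨xs, rfl, rfl⟩
  calc ∑ i ∈ Finset.Icc 1 n, u i (xs i)
      ≤ ∑ i ∈ Finset.Icc 1 n, (a * xs i + b) := Finset.sum_le_sum fun i hi => h i hi (xs i)
    _ = a * ∑ i ∈ Finset.Icc 1 n, xs i + n * b := by simp [Finset.sum_add_distrib, Finset.mul_sum]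

theorem sum_le_supConv {xs : ℕ → ℝ}
    (hbdd : BddAbove (splitValues u n (∑ i ∈ Finset.Icc 1 n, xs i))) :
    ∑ i ∈ Finset.Icc 1 n, u i (xs i) ≤ supConv u n (∑ i ∈ Finset.Icc 1 n, xs i) :=
  le_csSup hbdd ⟨xs, rfl, rfl⟩

theorem exists_supConv_sub_lt_sum (u : ℕ → ℝ → ℝ) (hn : 0 < n) {ε : ℝ} (hε : 0 < ε) (x : ℝ) :
    ∃ xs : ℕ → ℝ, ∑ i ∈ Finset.Icc 1 n, xs i = x ∧
      supConv u n x - ε < ∑ i ∈ Finset.Icc 1 n, u i (xs i) := by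
  obtain ⟨_, ⟨xs, hsum, rfl⟩, hlt⟩ :=
    exists_lt_of_lt_csSup (splitValues_nonempty u hn x) (sub_lt_self (supConv u n x) hε)
  exact ⟨xs, hsum, hlt⟩

theorem monotone_supConv (hn : 0 < n) (hmono : ∀ i ∈ Finset.Icc 1 n, Monotone (u i))
    (hbdd : ∀ x, BddAbove (splitValues u n x)) : Monotone (supConv u n) := by
  intro x y hxy
  refine csSup_le (splitValues_nonempty u hn x) ?_
  rintro _ ⟨xs, rfl, rfl⟩
  refine (sum_le_sum_add_single_one hmono xs (sub_nonneg.2 hxy)).trans ?_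
  exact le_csSup (hbdd y) ⟨_, by rw [sum_add_single_one hn, add_sub_cancel], rfl⟩

theorem concaveOn_supConv (hn : 0 < n)
    (hconc : ∀ i ∈ Finset.Icc 1 n, ConcaveOn ℝ Set.univ (u i))
    (hbdd : ∀ x, BddAbove (splitValues u n x)) : ConcaveOn ℝ Set.univ (supConv u n) := by
  refine ⟨convex_univ, fun x _ y _ a b ha hb hab => le_of_forall_pos_sub_le fun ε hε => ?_⟩
  obtain ⟨xs, rfl, hxs⟩ := exists_supConv_sub_lt_sum u hn hε x
  obtain ⟨ys, rfl, hys⟩ := exists_supConv_sub_lt_sum u hn hε y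
  simp only [smul_eq_mul]
  set x := ∑ i ∈ Finset.Icc 1 n, xs i
  set y := ∑ i ∈ Finset.Icc 1 n, ys i
  have hsum : ∑ i ∈ Finset.Icc 1 n, (a * xs i + b * ys i) = a * x + b * y := by
    rw [Finset.sum_add_distrib, ← Finset.mul_sum, ← Finset.mul_sum]
  calc a * supConv u n x + b * supConv u n y - ε
      = a * (supConv u n x - ε) + b * (supConv u n y - ε) := by linear_combination ε * hab
    _ ≤ a * ∑ i ∈ Finset.Icc 1 n, u i (xs i) + b * ∑ i ∈ Finset.Icc 1 n, u i (ys i) := by gcongr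
    _ = ∑ i ∈ Finset.Icc 1 n, (a * u i (xs i) + b * u i (ys i)) := by
        rw [Finset.sum_add_distrib, ← Finset.mul_sum, ← Finset.mul_sum]
    _ ≤ ∑ i ∈ Finset.Icc 1 n, u i (a * xs i + b * ys i) := Finset.sum_le_sum fun i hi =>
        (hconc i hi).2 (Set.mem_univ _) (Set.mem_univ _) ha hb hab
    _ ≤ supConv u n (∑ i ∈ Finset.Icc 1 n, (a * xs i + b * ys i)) := sum_le_supConv (hbdd _)
    _ = supConv u n (a * x + b * y) := by rw [hsum]

theorem continuous_supConv (hn : 0 < n)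
    (hconc : ∀ i ∈ Finset.Icc 1 n, ConcaveOn ℝ Set.univ (u i))
    (hbdd : ∀ x, BddAbove (splitValues u n x)) : Continuous (supConv u n) :=
  (concaveOn_supConv hn hconc hbdd).locallyLipschitz.continuous

end SupConv

theorem IsUtility.le_self {u u' : ℝ → ℝ} (h : IsUtility u u') (x : ℝ) : u x ≤ x := by
  have hconc := h.strictConcave.concaveOn
  have hderiv : HasDerivAt u 1 0 := h.deriv_zero ▸ h.hasDeriv 0
  rcases lt_trichotomy x 0 with hx | rfl | hx
  · have hslope := hconc.le_slope_of_hasDerivAt (Set.mem_univ x) (Set.mem_univ 0) hx hderiv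
    rw [slope_def_field, h.zero, le_div_iff₀ (by linarith)] at hslope
    linarith
  · exact h.zero.le
  · have hslope := hconc.slope_le_of_hasDerivAt (Set.mem_univ 0) (Set.mem_univ x) hx hderiv
    rw [slope_def_field, h.zero, div_le_iff₀ (by linarith)] at hslope
    linarith

namespace MeasBdd

variable {m : MeasurableSpace Ω} {X Y : Ω → ℝ}

theorem add (hX : MeasBdd m X) (hY : MeasBdd m Y) : MeasBdd m (fun ω => X ω + Y ω) := by
  obtain ⟨hXm, C, hC⟩ := hX
  obtain ⟨hYm, D, hD⟩ := hY
  exact ⟨hXm.add hYm, C + D, fun ω => (abs_add_le _ _).trans (add_le_add (hC ω) (hD ω))⟩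

theorem sub (hX : MeasBdd m X) (hY : MeasBdd m Y) : MeasBdd m (fun ω => X ω - Y ω) := by
  obtain ⟨hXm, C, hC⟩ := hX
  obtain ⟨hYm, D, hD⟩ := hY
  exact ⟨hXm.sub hYm, C + D, fun ω => (abs_sub _ _).trans (add_le_add (hC ω) (hD ω))⟩

theorem sum {ι : Type*} {X : ι → Ω → ℝ} {A : Finset ι} (hX : ∀ i ∈ A, MeasBdd m (X i)) :
    MeasBdd m (fun ω => ∑ i ∈ A, X i ω) := by
  choose! C hC using fun i hi => (hX i hi).2
  exact ⟨Finset.measurable_fun_sum A fun i hi => (hX i hi).1, ∑ i ∈ A, C i, fun ω =>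
    (Finset.abs_sum_le_sum_abs _ _).trans (Finset.sum_le_sum fun i hi => hC i hi ω)⟩

theorem monotone_comp (hX : MeasBdd m X) {f : ℝ → ℝ} (hf : Monotone f) :
    MeasBdd m (fun ω => f (X ω)) := by
  obtain ⟨hXm, C, hC⟩ := hX
  refine ⟨hf.measurable.comp hXm, max |f (-C)| |f C|, fun ω => ?_⟩
  obtain ⟨hlower, hupper⟩ := abs_le.1 (hC ω)
  exact abs_le_max_abs_abs (hf hlower) (hf hupper)

theorem of_simpleFunc (S : SimpleFunc Ω ℝ) : MeasBdd m S :=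
  ⟨S.measurable, S.exists_forall_norm_le⟩

theorem integrable {m₀ : MeasurableSpace Ω} {P : Measure Ω} [IsFiniteMeasure P] (hm : m ≤ m₀)
    (hX : MeasBdd m X) : Integrable X P := by
  obtain ⟨hXm, C, hC⟩ := hX
  exact .of_bound (hXm.mono hm le_rfl).aestronglyMeasurable C (ae_of_all _ hC)

theorem exists_simpleFunc_le_and_lt_add (hX : MeasBdd m X) {δ : ℝ} (hδ : 0 < δ) :
    ∃ S : SimpleFunc Ω ℝ, ∀ ω, S ω ≤ X ω ∧ X ω < S ω + δ := by
  obtain ⟨hXm, C, hC⟩ := hX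
  have hfinite : (Set.range fun ω => ⌊X ω / δ⌋).Finite := by
    refine (Set.finite_Icc ⌊-C / δ⌋ ⌊C / δ⌋).subset ?_
    rintro _ ⟨ω, rfl⟩
    obtain ⟨hlower, hupper⟩ := abs_le.1 (hC ω)
    exact ⟨Int.floor_le_floor (by gcongr), Int.floor_le_floor (by gcongr)⟩
  have hmeas : Measurable fun ω => ⌊X ω / δ⌋ := (hXm.div_const δ).floor
  let N : SimpleFunc Ω ℤ := ⟨_, fun k => hmeas (measurableSet_singleton k), hfinite⟩
  refine ⟨N.map fun k : ℤ => (k : ℝ) * δ, fun ω => ⟨?_, ?_⟩⟩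
  · exact (le_div_iff₀ hδ).1 (Int.floor_le (X ω / δ))
  · exact ((div_lt_iff₀ hδ).1 (Int.lt_floor_add_one (X ω / δ))).trans_eq (add_one_mul _ _)

theorem exists_simpleFunc_le_and_sub_le (hX : MeasBdd m X) {V : ℝ → ℝ} (hV : Continuous V)
    {ε : ℝ} (hε : 0 < ε) : ∃ S : SimpleFunc Ω ℝ, ∀ ω, S ω ≤ X ω ∧ V (X ω) - ε ≤ V (S ω) := by
  obtain ⟨C, hC⟩ := hX.2
  obtain ⟨δ, hδ, hVδ⟩ := Metric.uniformContinuousOn_iff_le.1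
    ((isCompact_Icc (a := -C - 1) (b := C)).uniformContinuousOn_of_continuous hV.continuousOn) ε hε
  obtain ⟨S, hS⟩ := hX.exists_simpleFunc_le_and_lt_add (lt_min hδ one_pos)
  refine ⟨S, fun ω => ⟨(hS ω).1, ?_⟩⟩
  obtain ⟨hle, hlt⟩ := hS ω
  obtain ⟨hlower, hupper⟩ := abs_le.1 (hC ω)
  have hclose : X ω - S ω < δ ∧ X ω - S ω < 1 := lt_min_iff.1 (by linarith)
  have hdist : dist (X ω) (S ω) ≤ δ := by
    rw [Real.dist_eq, abs_of_nonneg (by linarith)]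
    exact hclose.1.le
  have hVdist := hVδ (X ω) ⟨by linarith, hupper⟩ (S ω) ⟨by linarith, by linarith⟩ hdist
  linarith [le_of_abs_le hVdist]

theorem exists_split_supConv_sub_le {u : ℕ → ℝ → ℝ} {n : ℕ} (hX : MeasBdd m X) (hn : 0 < n)
    (hmono : ∀ i ∈ Finset.Icc 1 n, Monotone (u i)) (hcont : Continuous (supConv u n))
    {ε : ℝ} (hε : 0 < ε) :
    ∃ Y : ℕ → Ω → ℝ, (∀ i, MeasBdd m (Y i)) ∧ (∀ ω, ∑ i ∈ Finset.Icc 1 n, Y i ω = X ω) ∧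
      ∀ ω, supConv u n (X ω) - ε ≤ ∑ i ∈ Finset.Icc 1 n, u i (Y i ω) := by
  obtain ⟨S, hS⟩ := hX.exists_simpleFunc_le_and_sub_le hcont (half_pos hε)
  choose ξ hξsum hξ using exists_supConv_sub_lt_sum u hn (half_pos hε)
  refine ⟨fun i ω => ξ (S ω) i + (Pi.single 1 (X ω - S ω) : ℕ → ℝ) i,
    fun i => ?_, fun ω => ?_, fun ω => ?_⟩
  · refine (of_simpleFunc (S.map fun x => ξ x i)).add ?_
    rcases eq_or_ne i 1 with rfl | hi
    · simpa only [Pi.single_eq_same] using hX.sub (of_simpleFunc S)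
    · simp only [Pi.single_eq_of_ne hi]
      exact of_simpleFunc (.const Ω 0)
  · rw [sum_add_single_one hn, hξsum, add_sub_cancel]
  · have hsplit := sum_le_sum_add_single_one hmono (ξ (S ω)) (sub_nonneg.2 (hS ω).1)
    linarith [hξ (S ω), (hS ω).2]

end MeasBdd

section ConditionalExpectation

variable {m m₀ : MeasurableSpace Ω} {P : Measure Ω}

theorem ae_le_of_forall_pos_ae_le_add_const_mul {f g : Ω → ℝ} (c : ℝ)
    (h : ∀ ε > 0, f ≤ᵐ[P] fun ω => g ω + c * ε) : f ≤ᵐ[P] g := by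
  have hseq : ∀ᵐ ω ∂P, ∀ k : ℕ, f ω ≤ g ω + c * (1 / ((k : ℝ) + 1)) :=
    ae_all_iff.2 fun k => h _ Nat.one_div_pos_of_nat
  filter_upwards [hseq] with ω hω
  have hlim := (tendsto_one_div_add_atTop_nhds_zero_nat (𝕜 := ℝ).const_mul c).const_add (g ω)
  rw [mul_zero, add_zero] at hlim
  exact ge_of_tendsto' hlim hω

theorem condExp_ae_le_add_const [IsFiniteMeasure P] (hm : m ≤ m₀) {f g : Ω → ℝ} {c : ℝ}
    (hf : Integrable f P) (hg : Integrable g P) (hfg : f ≤ᵐ[P] fun ω => g ω + c) :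
    P[f | m] ≤ᵐ[P] fun ω => (P[g | m]) ω + c := by
  have hconst : Integrable (fun _ : Ω => c) P := integrable_const c
  filter_upwards [condExp_mono (m := m) hf (hg.add hconst) hfg,
    condExp_add hg hconst m] with ω hle hadd
  rwa [hadd, condExp_const hm] at hle

theorem sum_condExp_ae_le_add_card_mul [IsFiniteMeasure P] (hm : m ≤ m₀) {ι : Type*}
    {A : Finset ι} {f g : ι → Ω → ℝ} {c : ℝ} (hf : ∀ s ∈ A, Integrable (f s) P)
    (hg : ∀ s ∈ A, Integrable (g s) P) (hfg : ∀ s ∈ A, f s ≤ᵐ[P] fun ω => g s ω + c) :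
    (fun ω => ∑ s ∈ A, (P[f s | m]) ω) ≤ᵐ[P] fun ω => ∑ s ∈ A, (P[g s | m]) ω + A.card * c := by
  have hall := (eventually_all_finset A).2 fun s hs =>
    condExp_ae_le_add_const hm (hf s hs) (hg s hs) (hfg s hs)
  filter_upwards [hall] with ω hω
  simpa [Finset.sum_add_distrib] using Finset.sum_le_sum hω

theorem utilSum_ae_eq {ℱ : Filtration ℕ m₀} {u : ℕ → ℕ → ℝ → ℝ} {n t T : ℕ}
    {X : ℕ → ℕ → Ω → ℝ}
    (hint : ∀ i ∈ Finset.Icc 1 n, ∀ s ∈ Finset.Icc t T,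
      Integrable (fun ω => u i s (X i s ω)) P) :
    utilSum P ℱ u n t T X =ᵐ[P] fun ω => ∑ s ∈ Finset.Icc t T,
      (P[fun ω' => ∑ i ∈ Finset.Icc 1 n, u i s (X i s ω') | ℱ t]) ω := by
  have hall := (eventually_all_finset (Finset.Icc t T)).2 fun s hs =>
    condExp_finsetSum (fun i hi => hint i hi s hs) (ℱ t)
  filter_upwards [hall] with ω hω
  rw [utilSum, Finset.sum_comm]
  refine Finset.sum_congr rfl fun s hs => ?_
  rw [← Finset.sum_apply, ← hω s hs, Finset.sum_fn]

end ConditionalExpectation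

section Diversification

variable {m₀ : MeasurableSpace Ω} {P : Measure Ω} {ℱ : Filtration ℕ m₀} {n t T : ℕ}
  {u : ℕ → ℕ → ℝ → ℝ} {Z : Ω → ℝ}

/-- The objective `∑ s, E[u_s^{(n)}(X_s) | 𝓕_t]` of the one-product problem. -/
noncomputable def supConvUtilSum (P : Measure Ω) (ℱ : Filtration ℕ m₀) (u : ℕ → ℕ → ℝ → ℝ)
    (n t T : ℕ) (X : ℕ → Ω → ℝ) : Ω → ℝ :=
  fun ω => ∑ s ∈ Finset.Icc t T, (P[fun ω' => supConv (fun i => u i s) n (X s ω') | ℱ t]) ω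

theorem IsDiv.isDiv1_sum {X : ℕ → ℕ → Ω → ℝ} (hX : IsDiv P ℱ n t T Z X) :
    IsDiv1 P ℱ t T Z (fun s ω => ∑ i ∈ Finset.Icc 1 n, X i s ω) := by
  refine ⟨fun s hs => .sum fun i hi => hX.1 i hi s hs, ?_⟩
  filter_upwards [hX.2] with ω hω
  rw [Finset.sum_comm, hω]

theorem IsDiv1.isDiv_of_sum_eq {X : ℕ → Ω → ℝ} {Y : ℕ → ℕ → Ω → ℝ} (hX : IsDiv1 P ℱ t T Z X)
    (hY : ∀ i ∈ Finset.Icc 1 n, ∀ s ∈ Finset.Icc t T, MeasBdd (ℱ s) (Y i s))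
    (hsum : ∀ s ∈ Finset.Icc t T, ∀ ω, ∑ i ∈ Finset.Icc 1 n, Y i s ω = X s ω) :
    IsDiv P ℱ n t T Z Y := by
  refine ⟨hY, ?_⟩
  filter_upwards [hX.2] with ω hω
  rw [Finset.sum_comm, ← hω]
  exact Finset.sum_congr rfl fun s hs => hsum s hs ω

variable [IsFiniteMeasure P]

theorem IsDiv.integrable_utility {X : ℕ → ℕ → Ω → ℝ} (hX : IsDiv P ℱ n t T Z X)
    (hmono : ∀ i ∈ Finset.Icc 1 n, ∀ s ∈ Finset.Icc t T, Monotone (u i s)) :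
    ∀ i ∈ Finset.Icc 1 n, ∀ s ∈ Finset.Icc t T, Integrable (fun ω => u i s (X i s ω)) P :=
  fun i hi s hs => ((hX.1 i hi s hs).monotone_comp (hmono i hi s hs)).integrable (ℱ.le s)

theorem IsDiv1.integrable_supConv {X : ℕ → Ω → ℝ} (hX : IsDiv1 P ℱ t T Z X) (hn : 0 < n)
    (hmono : ∀ i ∈ Finset.Icc 1 n, ∀ s ∈ Finset.Icc t T, Monotone (u i s))
    (hbdd : ∀ s ∈ Finset.Icc t T, ∀ x, BddAbove (splitValues (fun i => u i s) n x)) :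
    ∀ s ∈ Finset.Icc t T, Integrable (fun ω => supConv (fun i => u i s) n (X s ω)) P :=
  fun s hs => ((hX.1 s hs).monotone_comp
    (monotone_supConv hn (fun i hi => hmono i hi s hs) (hbdd s hs))).integrable (ℱ.le s)

theorem IsDiv.utilSum_ae_le_supConvUtilSum {X : ℕ → ℕ → Ω → ℝ} (hX : IsDiv P ℱ n t T Z X)
    (hn : 0 < n) (hmono : ∀ i ∈ Finset.Icc 1 n, ∀ s ∈ Finset.Icc t T, Monotone (u i s))
    (hbdd : ∀ s ∈ Finset.Icc t T, ∀ x, BddAbove (splitValues (fun i => u i s) n x)) :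
    utilSum P ℱ u n t T X ≤ᵐ[P]
      supConvUtilSum P ℱ u n t T (fun s ω => ∑ i ∈ Finset.Icc 1 n, X i s ω) := by
  have hint := hX.integrable_utility hmono
  have hle := sum_condExp_ae_le_add_card_mul (c := 0) (ℱ.le t)
    (fun s hs => integrable_finsetSum _ fun i hi => hint i hi s hs)
    (hX.isDiv1_sum.integrable_supConv hn hmono hbdd)
    (fun s hs => ae_of_all _ fun ω => (sum_le_supConv (hbdd s hs _)).trans_eq (add_zero _).symm)
  simp only [mul_zero, add_zero] at hle
  exact (utilSum_ae_eq hint).trans_le hle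

theorem IsDiv1.exists_isDiv_supConvUtilSum_ae_le {X : ℕ → Ω → ℝ} (hX : IsDiv1 P ℱ t T Z X)
    (hn : 0 < n) (hmono : ∀ i ∈ Finset.Icc 1 n, ∀ s ∈ Finset.Icc t T, Monotone (u i s))
    (hconc : ∀ i ∈ Finset.Icc 1 n, ∀ s ∈ Finset.Icc t T, ConcaveOn ℝ Set.univ (u i s))
    (hbdd : ∀ s ∈ Finset.Icc t T, ∀ x, BddAbove (splitValues (fun i => u i s) n x))
    {ε : ℝ} (hε : 0 < ε) :
    ∃ Y, IsDiv P ℱ n t T Z Y ∧ supConvUtilSum P ℱ u n t T X ≤ᵐ[P]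
      fun ω => utilSum P ℱ u n t T Y ω + (Finset.Icc t T).card * ε := by
  choose! Y hYmeas hYsum hYle using fun s hs => (hX.1 s hs).exists_split_supConv_sub_le hn
    (fun i hi => hmono i hi s hs)
    (continuous_supConv hn (fun i hi => hconc i hi s hs) (hbdd s hs)) hε
  have hY : IsDiv P ℱ n t T Z fun i s => Y s i :=
    hX.isDiv_of_sum_eq (fun i _ s hs => hYmeas s hs i) hYsum
  have hint := hY.integrable_utility hmono
  refine ⟨_, hY, ?_⟩
  filter_upwards [utilSum_ae_eq hint, sum_condExp_ae_le_add_card_mul (ℱ.le t)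
    (hX.integrable_supConv hn hmono hbdd)
    (fun s hs => integrable_finsetSum _ fun i hi => hint i hi s hs)
    (fun s hs => ae_of_all _ fun ω => sub_le_iff_le_add.1 (hYle s hs ω))] with ω heq hle
  rwa [heq]

end Diversification

theorem isEssSupOf_congr {m₀ : MeasurableSpace Ω} {P : Measure Ω} {S S' : Set (Ω → ℝ)}
    (h : ∀ g, (∀ f ∈ S, f ≤ᵐ[P] g) ↔ ∀ f ∈ S', f ≤ᵐ[P] g) (g : Ω → ℝ) :
    IsEssSupOf P S g ↔ IsEssSupOf P S' g := by
  simp only [IsEssSupOf, h]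

theorem conditional_utility_eq_supConv_essSup_general
    {m₀ : MeasurableSpace Ω} (P : Measure Ω) [IsFiniteMeasure P] (ℱ : Filtration ℕ m₀)
    (T n t : ℕ) (hn : 0 < n) (u : ℕ → ℕ → ℝ → ℝ)
    (hmono : ∀ i ∈ Finset.Icc 1 n, ∀ s ∈ Finset.Icc t T, Monotone (u i s))
    (hconc : ∀ i ∈ Finset.Icc 1 n, ∀ s ∈ Finset.Icc t T, ConcaveOn ℝ Set.univ (u i s))
    (hbdd : ∀ s ∈ Finset.Icc t T, ∀ x, BddAbove (splitValues (fun i => u i s) n x))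
    (Z g : Ω → ℝ) :
    IsEssSupOf P {f | ∃ X, IsDiv P ℱ n t T Z X ∧ f = utilSum P ℱ u n t T X} g ↔
      IsEssSupOf P {f | ∃ X, IsDiv1 P ℱ t T Z X ∧ f = supConvUtilSum P ℱ u n t T X} g := by
  refine isEssSupOf_congr (fun h => ⟨?_, ?_⟩) g
  · rintro hle _ ⟨X, hX, rfl⟩
    refine ae_le_of_forall_pos_ae_le_add_const_mul (Finset.Icc t T).card fun ε hε => ?_
    obtain ⟨Y, hY, hXY⟩ := hX.exists_isDiv_supConvUtilSum_ae_le hn hmono hconc hbdd hε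
    filter_upwards [hXY, hle _ ⟨Y, hY, rfl⟩] with ω hω hYω
    exact hω.trans (by gcongr)
  · rintro hle _ ⟨X, hX, rfl⟩
    exact (hX.utilSum_ae_le_supConvUtilSum hn hmono hbdd).trans (hle _ ⟨_, hX.isDiv1_sum, rfl⟩)

/-- Proposition 2.17: the `n`-fold diversification problem reduces to the
one-product problem for the sup-convolutions `u_s^{(n)}`:
`U_t(Z) = esssup_{(X_s) ∈ 𝓐_{1,t}(Z)} Σ_{s=t}^T E[u_s^{(n)}(X_s) | 𝓕_t]`. -/
theorem conditional_utility_eq_supConv_essSup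
    {m0 : MeasurableSpace Ω} (P : Measure Ω) [IsProbabilityMeasure P]
    (ℱ : Filtration ℕ m0) (T n t : ℕ) (hT : 0 < T) (hn : 0 < n) (ht : t ≤ T)
    (u u' : ℕ → ℕ → ℝ → ℝ) (hu : ∀ i s, IsUtility (u i s) (u' i s))
    (U : (Ω → ℝ) → Ω → ℝ)
    (hU : ∀ W : Ω → ℝ, MeasBdd (ℱ T) W →
      IsEssSupOf P
        {g | ∃ X : ℕ → ℕ → Ω → ℝ, IsDiv P ℱ n t T W X ∧ g = utilSum P ℱ u n t T X}
        (U W))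
    (Z : Ω → ℝ) (hZ : MeasBdd (ℱ T) Z) :
    IsEssSupOf P
      {g | ∃ X : ℕ → Ω → ℝ, IsDiv1 P ℱ t T Z X ∧
        g = fun ω => ∑ s ∈ Finset.Icc t T,
          (P[fun ω' => supConv (fun i => u i s) n (X s ω') | ℱ t]) ω}
      (U Z) := by
  have hbdd (s : ℕ) : ∀ x, BddAbove (splitValues (fun i => u i s) n x) :=
    bddAbove_splitValues_of_le_affine (a := 1) (b := 0) fun i _ x => by
      simpa only [one_mul, add_zero] using (hu i s).le_self x
  exact (conditional_utility_eq_supConv_essSup_general P ℱ T n t hn u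
    (fun i _ s _ => (hu i s).strictMono.monotone)
    (fun i _ s _ => (hu i s).strictConcave.concaveOn)
    (fun s _ => hbdd s) Z (U Z)).1 (hU Z hZ)
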